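/- Let (P_t)_{t≥0} be the Markov semigroup of the Langevin diffusion, i.e. P_t h(x) = E[h(X_t^x)]. Under Assumptions 1 and 3, for every h ∈ C²(ℝ^d, ℝ) with ‖∇h‖ < ∞ and ‖∇²h‖ < ∞ and every t ≥ 0: (i) ‖∇P_t h‖ ≤ ‖∇h‖ e^{−mt}; (ii) there exists a constant C > 0 independent of t and h with ‖∇²P_t h‖ ≤ C(‖∇h‖ + ‖∇²h‖) e^{−mt/2}, where ‖∇f‖ = sup_x |∇f(x)| and ‖∇²f‖ = sup_x ‖∇²f(x)‖_op. -/

import Mathlib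

open MeasureTheory ProbabilityTheory Filter
open scoped ENNReal NNReal RealInnerProductSpace Topology BigOperators

noncomputable section

/-- Euclidean space `ℝ^d`. -/
abbrev Euc (d : ℕ) : Type := EuclideanSpace ℝ (Fin d)

/-- Assumption 1: `U` is `C¹`, `m`-strongly convex and `L`-gradient Lipschitz
(expressed through the two-sided quadratic bound), with `∇U(0) = 0`. -/
def StrongAssumption {d : ℕ} (U : Euc d → ℝ) (m L : ℝ) : Prop :=
  ContDiff ℝ 1 U ∧ 0 < m ∧ m ≤ L ∧
  (∀ x y : Euc d,
    m / 2 * ‖x - y‖ ^ 2 ≤ U y - U x - ⟪gradient U x, y - x⟫ ∧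
    U y - U x - ⟪gradient U x, y - x⟫ ≤ L / 2 * ‖x - y‖ ^ 2) ∧
  gradient U 0 = 0

/-- Assumption 3: `U` is `C³` with third derivative uniformly bounded by `Lt`. -/
def ThirdDerivBounded {d : ℕ} (U : Euc d → ℝ) (Lt : ℝ) : Prop :=
  ContDiff ℝ 3 U ∧ ∀ x : Euc d, ‖iteratedFDeriv ℝ 3 U x‖ ≤ Lt

/-- The standard Gaussian measure on `ℝ^d`. -/
def stdGaussian (d : ℕ) : Measure (Euc d) :=
  (Measure.pi fun _ : Fin d => ProbabilityTheory.gaussianReal 0 1).map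
    ⇑(EuclideanSpace.equiv (Fin d) ℝ).symm

/-- Bernoulli(p) distribution on `ℝ`, giving mass `p` to `1` and `1-p` to `0`. -/
def bern (p : ℝ≥0∞) : Measure ℝ :=
  p • Measure.dirac (1 : ℝ) + (1 - p) • Measure.dirac (0 : ℝ)

/-- The `i`-th PRLMC midpoint. -/
def prlmcMid {d : ℕ} (U : Euc d → ℝ) (η : ℝ) (K : ℕ) (x : Euc d)
    (g : Fin K → Euc d) (i : Fin K) : Euc d :=
  x - (((i : ℝ) * η / (K : ℝ)) • gradient U x) + Real.sqrt (2 * (i : ℝ) * η / (K : ℝ)) • g i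

/-- One step of the PRLMC scheme with step size `η`, Bernoulli variables `h`,
midpoint Gaussians `g` and driving Gaussian `z`. -/
def prlmcStep {d : ℕ} (U : Euc d → ℝ) (η : ℝ) (K : ℕ) (x : Euc d)
    (h : Fin K → ℝ) (g : Fin K → Euc d) (z : Euc d) : Euc d :=
  x - η • gradient U x
    + η • ∑ i : Fin K, h i • (gradient U x - gradient U (prlmcMid U η K x g i))
    + Real.sqrt (2 * η) • z

/-- The law of the randomness used at a single step of the PRLMC scheme:
`K` i.i.d. Bernoulli(1/K) variables, `K` i.i.d. standard Gaussians for the midpoints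
and one standard Gaussian. -/
def prlmcNoise (d K : ℕ) : Measure ((Fin K → ℝ) × (Fin K → Euc d) × Euc d) :=
  (Measure.pi fun _ : Fin K => bern (K : ℝ≥0∞)⁻¹).prod
    ((Measure.pi fun _ : Fin K => stdGaussian d).prod (stdGaussian d))

/-- The one-step transition kernel `Q_η` of the PRLMC chain. -/
def prlmcKernel {d : ℕ} (U : Euc d → ℝ) (η : ℝ) (K : ℕ) (x : Euc d) : Measure (Euc d) :=
  (prlmcNoise d K).map fun r => prlmcStep U η K x r.1 r.2.1 r.2.2

/-- The law of the PRLMC chain after `n` steps, started from the distribution `μ`. -/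
def prlmcIter {d : ℕ} (U : Euc d → ℝ) (η : ℝ) (K : ℕ) (μ : Measure (Euc d)) :
    ℕ → Measure (Euc d)
  | 0 => μ
  | n + 1 => (prlmcIter U η K μ n).bind (prlmcKernel U η K)

/-- The law of the decreasing-step PRLMC chain after `n` steps (the `(k+1)`-th step uses
step size `γ (k+1)`), started from the distribution `μ`. -/
def prlmcIterVar {d : ℕ} (U : Euc d → ℝ) (K : ℕ) (γ : ℕ → ℝ) (μ : Measure (Euc d)) :
    ℕ → Measure (Euc d)
  | 0 => μ
  | n + 1 => (prlmcIterVar U K γ μ n).bind (prlmcKernel U (γ (n + 1)) K)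

/-- Total variation distance. -/
def dTV {d : ℕ} (μ ν : Measure (Euc d)) : ℝ≥0∞ :=
  ⨆ (A : Set (Euc d)) (_ : MeasurableSet A), max (μ A - ν A) (ν A - μ A)

/-- 2-Wasserstein distance. -/
def W2 {d : ℕ} (μ ν : Measure (Euc d)) : ℝ≥0∞ :=
  ⨅ (π : Measure (Euc d × Euc d)) (_ : π.map Prod.fst = μ ∧ π.map Prod.snd = ν),
    (∫⁻ p, ((‖p.1 - p.2‖₊ : ℝ≥0∞)) ^ 2 ∂π) ^ (1 / 2 : ℝ)

/-- The Gibbs measure `π(dx) ∝ exp(-U(x)) dx`. -/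
def gibbs {d : ℕ} (U : Euc d → ℝ) : Measure (Euc d) :=
  (∫⁻ x, ENNReal.ofReal (Real.exp (-U x)) ∂(volume : Measure (Euc d)))⁻¹ •
    (volume : Measure (Euc d)).withDensity fun x => ENNReal.ofReal (Real.exp (-U x))

/-- Membership in the functional class `𝒢`: `C²` functions with bounded gradient and
bounded Hessian. -/
def MemG {d : ℕ} (h : Euc d → ℝ) : Prop :=
  ContDiff ℝ 2 h ∧ (∃ M, ∀ x, ‖gradient h x‖ ≤ M) ∧
    (∃ M, ∀ x, ‖iteratedFDeriv ℝ 2 h x‖ ≤ M)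

/-- The distance `d_𝒢`. -/
def dG {d : ℕ} (μ ν : Measure (Euc d)) : ℝ :=
  sSup { r : ℝ | ∃ h : Euc d → ℝ, MemG h ∧ r = (∫ x, h x ∂μ) - ∫ x, h x ∂ν }

/-- `B` is a standard `d`-dimensional Brownian motion on `(Ω, P)`. -/
def IsBrownianMotion {Ω : Type} [MeasurableSpace Ω] {d : ℕ} (P : Measure Ω)
    (B : ℝ → Ω → Euc d) : Prop :=
  (∀ t, Measurable (B t)) ∧
  (∀ᵐ ω ∂P, B 0 ω = 0 ∧ Continuous fun t => B t ω) ∧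
  (∀ s t : ℝ, 0 ≤ s → s ≤ t →
    Measure.map (fun ω => B t ω - B s ω) P
      = Measure.map (fun z => Real.sqrt (t - s) • z) (stdGaussian d)) ∧
  (∀ τ : ℕ → ℝ, Monotone τ → 0 ≤ τ 0 →
    iIndepFun (fun i ω => B (τ (i + 1)) ω - B (τ i) ω) P)

/-- `X` is a solution of the Langevin SDE `dX_t = -∇U(X_t) dt + √2 dB_t` started at `x`. -/
def SolvesLangevin {Ω : Type} [MeasurableSpace Ω] {d : ℕ} (U : Euc d → ℝ) (P : Measure Ω)
    (B X : ℝ → Ω → Euc d) (x : Euc d) : Prop :=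
  (∀ t, Measurable (X t)) ∧
  ∀ᵐ ω ∂P, (Continuous fun t => X t ω) ∧ ∀ t, 0 ≤ t →
    X t ω = x - (∫ s in (0:ℝ)..t, gradient U (X s ω)) + Real.sqrt 2 • B t ω

/-- `κ = 2mL/(m+L)`. -/
def kap (m L : ℝ) : ℝ := 2 * m * L / (m + L)

/-- Cumulative times `t_n = γ_1 + ⋯ + γ_n`. -/
def tseq (γ : ℕ → ℝ) (n : ℕ) : ℝ := ∑ k ∈ Finset.Icc 1 n, γ k

/-!
Solutions driven by the same noise and started at different points are compared path by path: the
noise cancels in their difference, which therefore contracts at rate `m` by strong convexity. In the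
second difference `X^{x+u+v} - X^{x+u} - X^{x+v} + X^x` the drift difference is again strongly
monotone, up to an error `O(|u| |v| e^{-2mt})` coming from the bounded third derivative of `U`, so
that this second difference is at most `(Lt / m) e^{-mt} |u| |v|`. Taking expectations, `P_t h` is
Lipschitz and its second differences are `O(|u| |v| e^{-mt})`. No derivative of the flow is needed:
by Rademacher's theorem a Lipschitz function with such second differences is differentiable on a
dense set, the second differences make its derivative Lipschitz there, and both properties extend to
the whole space.
-/

open scoped fwdDiff

section SecondDifference

variable {E F : Type*} [NormedAddCommGroup E] [NormedSpace ℝ E]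
  [NormedAddCommGroup F] [NormedSpace ℝ F] {f : E → F} {K M : ℝ}

theorem norm_fderiv_fderiv (f : E → F) (x : E) :
    ‖fderiv ℝ (fderiv ℝ f) x‖ = ‖iteratedFDeriv ℝ 2 f x‖ := by
  rw [← norm_iteratedFDeriv_one, norm_iteratedFDeriv_fderiv]

theorem norm_sub_le_of_norm_fderiv_le (hf : Differentiable ℝ f) (hM : ∀ x, ‖fderiv ℝ f x‖ ≤ M)
    (x y : E) : ‖f x - f y‖ ≤ M * ‖x - y‖ :=
  convex_univ.norm_image_sub_le_of_norm_fderiv_le (fun z _ ↦ hf z) (fun z _ ↦ hM z)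
    (Set.mem_univ y) (Set.mem_univ x)

theorem norm_fwdDiff_fwdDiff_le (hf : ContDiff ℝ 2 f) (hK : ∀ x, ‖iteratedFDeriv ℝ 2 f x‖ ≤ K)
    (x u v : E) : ‖Δ_[u] (Δ_[v] f) x‖ ≤ K * ‖u‖ * ‖v‖ := by
  have hf₁ : Differentiable ℝ f := hf.differentiable two_ne_zero
  have hf₂ : Differentiable ℝ (fderiv ℝ f) :=
    (hf.fderiv_right (m := 1) le_rfl).differentiable one_ne_zero
  have hderiv (z : E) : HasFDerivAt (Δ_[v] f) (fderiv ℝ f (z + v) - fderiv ℝ f z) z :=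
    ((hasFDerivAt_comp_add_right v).2 (hf₁ (z + v)).hasFDerivAt).sub (hf₁ z).hasFDerivAt
  have hbound (z : E) : ‖fderiv ℝ (Δ_[v] f) z‖ ≤ K * ‖v‖ := by
    rw [(hderiv z).fderiv]
    simpa using norm_sub_le_of_norm_fderiv_le hf₂
      (fun w ↦ (norm_fderiv_fderiv f w).trans_le (hK w)) (z + v) z
  calc ‖Δ_[u] (Δ_[v] f) x‖ ≤ K * ‖v‖ * ‖x + u - x‖ :=
        norm_sub_le_of_norm_fderiv_le (fun z ↦ (hderiv z).differentiableAt) hbound (x + u) x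
    _ = K * ‖u‖ * ‖v‖ := by rw [add_sub_cancel_left]; ring

theorem norm_parallelogram_le (hf : ContDiff ℝ 2 f) (hK : ∀ x, ‖iteratedFDeriv ℝ 2 f x‖ ≤ K)
    (p q r : E) : ‖f (p + (q - r)) - f p - (f q - f r)‖ ≤ K * ‖p - r‖ * ‖q - r‖ := by
  simpa only [fwdDiff, add_sub_cancel] using norm_fwdDiff_fwdDiff_le hf hK r (p - r) (q - r)

theorem norm_sub_sub_sub_le (hf : ContDiff ℝ 2 f) (hM : ∀ x, ‖fderiv ℝ f x‖ ≤ M)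
    (hK : ∀ x, ‖iteratedFDeriv ℝ 2 f x‖ ≤ K) (a p q r : E) :
    ‖f a - f p - (f q - f r)‖ ≤ M * ‖a - p - (q - r)‖ + K * ‖p - r‖ * ‖q - r‖ := by
  have hsplit : f a - f p - (f q - f r) =
      (f a - f (p + (q - r))) + (f (p + (q - r)) - f p - (f q - f r)) := by abel
  have hM' := norm_sub_le_of_norm_fderiv_le (hf.differentiable two_ne_zero) hM a (p + (q - r))
  rw [← sub_sub] at hM'
  rw [hsplit]
  exact (norm_add_le _ _).trans (add_le_add hM' (norm_parallelogram_le hf hK p q r))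

theorem norm_fderiv_sub_fderiv_le_of_norm_fwdDiff_fwdDiff_le (hK : 0 ≤ K)
    (hΔ : ∀ x u v, ‖Δ_[u] (Δ_[v] f) x‖ ≤ K * ‖u‖ * ‖v‖) {y z : E}
    (hy : DifferentiableAt ℝ f y) (hz : DifferentiableAt ℝ f z) :
    ‖fderiv ℝ f y - fderiv ℝ f z‖ ≤ K * ‖y - z‖ := by
  have htranslate {w : E} (hw : DifferentiableAt ℝ f w) :
      HasFDerivAt (fun v ↦ f (w + v)) (fderiv ℝ f w) 0 := by
    rw [hasFDerivAt_comp_add_left, add_zero]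
    exact hw.hasFDerivAt
  refine ((htranslate hy).sub (htranslate hz)).le_of_lip' (by positivity) (.of_forall fun v ↦ ?_)
  calc ‖f (y + v) - f (z + v) - (f (y + 0) - f (z + 0))‖ = ‖Δ_[y - z] (Δ_[v] f) z‖ := by
        simp only [fwdDiff, add_sub_cancel, add_zero]
        congr 1
        abel
    _ ≤ K * ‖y - z‖ * ‖v - 0‖ := by simpa only [sub_zero] using hΔ z (y - z) v

theorem hasFDerivAt_of_tendsto_of_norm_fwdDiff_fwdDiff_le
    (hΔ : ∀ x u v, ‖Δ_[u] (Δ_[v] f) x‖ ≤ K * ‖u‖ * ‖v‖) {y : E} {z : ℕ → E} {f' : E →L[ℝ] F}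
    (hz : ∀ n, DifferentiableAt ℝ f (z n)) (hzy : Tendsto z atTop (𝓝 y))
    (hf' : Tendsto (fun n ↦ fderiv ℝ f (z n)) atTop (𝓝 f')) : HasFDerivAt f f' y := by
  rw [hasFDerivAt_iff_isLittleO_nhds_zero, Asymptotics.isLittleO_iff]
  intro ε hε
  have hdist : Tendsto (fun n ↦ K * ‖y - z n‖ + ‖fderiv ℝ f (z n) - f'‖) atTop (𝓝 0) := by
    simpa using (((tendsto_const_nhds (x := y)).sub hzy).norm.const_mul K).add
      (tendsto_iff_norm_sub_tendsto_zero.1 hf')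
  obtain ⟨n, hn⟩ := (hdist.eventually_lt_const (half_pos hε)).exists
  filter_upwards [(hasFDerivAt_iff_isLittleO_nhds_zero.1 (hz n).hasFDerivAt).def (half_pos hε)]
    with v hv
  have hsplit : f (y + v) - f y - f' v = Δ_[y - z n] (Δ_[v] f) (z n)
      + (f (z n + v) - f (z n) - fderiv ℝ f (z n) v) + (fderiv ℝ f (z n) - f') v := by
    simp only [fwdDiff, add_sub_cancel, sub_apply]
    abel
  calc ‖f (y + v) - f y - f' v‖
      ≤ K * ‖y - z n‖ * ‖v‖ + ε / 2 * ‖v‖ + ‖fderiv ℝ f (z n) - f'‖ * ‖v‖ := by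
        rw [hsplit]
        exact norm_add₃_le.trans
          (add_le_add_three (hΔ _ _ _) hv ((fderiv ℝ f (z n) - f').le_opNorm v))
    _ = (K * ‖y - z n‖ + ‖fderiv ℝ f (z n) - f'‖) * ‖v‖ + ε / 2 * ‖v‖ := by ring
    _ ≤ ε / 2 * ‖v‖ + ε / 2 * ‖v‖ := by gcongr
    _ = ε * ‖v‖ := by ring

variable [FiniteDimensional ℝ E] [FiniteDimensional ℝ F] {A : ℝ≥0}

theorem differentiable_of_norm_fwdDiff_fwdDiff_le (hf : LipschitzWith A f) (hK : 0 ≤ K)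
    (hΔ : ∀ x u v, ‖Δ_[u] (Δ_[v] f) x‖ ≤ K * ‖u‖ * ‖v‖) : Differentiable ℝ f := by
  borelize E
  intro y
  have hdense : Dense {x | DifferentiableAt ℝ f x} :=
    Measure.dense_of_ae (hf.ae_differentiableAt (μ := Measure.addHaar))
  obtain ⟨z, hz, hzy⟩ := mem_closure_iff_seq_limit.1 (hdense y)
  have := FiniteDimensional.complete ℝ F
  have hcauchy : CauchySeq fun n ↦ fderiv ℝ f (z n) := by
    refine cauchySeq_iff_tendsto_dist_atTop_0.2 <| squeeze_zero
      (g := fun n : ℕ × ℕ ↦ K * dist (z n.1) (z n.2)) (fun _ ↦ dist_nonneg) (fun n ↦ ?_) ?_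
    · simpa only [dist_eq_norm] using
        norm_fderiv_sub_fderiv_le_of_norm_fwdDiff_fwdDiff_le hK hΔ (hz n.1) (hz n.2)
    · simpa using (cauchySeq_iff_tendsto_dist_atTop_0.1 hzy.cauchySeq).const_mul K
  obtain ⟨f', hf'⟩ := cauchySeq_tendsto_of_complete hcauchy
  exact (hasFDerivAt_of_tendsto_of_norm_fwdDiff_fwdDiff_le hΔ hz hzy hf').differentiableAt

theorem norm_iteratedFDeriv_two_le_of_norm_fwdDiff_fwdDiff_le (hf : LipschitzWith A f)
    (hK : 0 ≤ K) (hΔ : ∀ x u v, ‖Δ_[u] (Δ_[v] f) x‖ ≤ K * ‖u‖ * ‖v‖) (x : E) :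
    ‖iteratedFDeriv ℝ 2 f x‖ ≤ K := by
  have hdiff := differentiable_of_norm_fwdDiff_fwdDiff_le hf hK hΔ
  rw [← norm_fderiv_fderiv]
  exact norm_fderiv_le_of_lip' ℝ hK (.of_forall fun y ↦
    norm_fderiv_sub_fderiv_le_of_norm_fwdDiff_fwdDiff_le hK hΔ (hdiff y) (hdiff x))

end SecondDifference

section Dissipative

variable {E : Type*} [NormedAddCommGroup E] [InnerProductSpace ℝ E]

theorem norm_le_add_of_inner_deriv_le {W W' : ℝ → E} {α β : ℝ → ℝ}
    (hW : ∀ t, 0 ≤ t → HasDerivWithinAt W (W' t) (Set.Ici 0) t)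
    (hβ : ∀ t, 0 ≤ t → HasDerivWithinAt β (α t) (Set.Ici 0) t) (hα : ∀ t, 0 ≤ t → 0 ≤ α t)
    (hinner : ∀ t, 0 ≤ t → ⟪W t, W' t⟫ ≤ ‖W t‖ * α t) {t : ℝ} (ht : 0 ≤ t) :
    ‖W t‖ ≤ ‖W 0‖ + (β t - β 0) := by
  refine le_of_forall_pos_le_add fun ε hε ↦ ?_
  -- The norm is not differentiable at the origin, hence the regularization by `ε`.
  set ρ : ℝ → ℝ := fun s ↦ √(‖W s‖ ^ 2 + ε ^ 2)
  have hρ_pos (s : ℝ) : 0 < ρ s := by positivity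
  have hle_ρ (s : ℝ) : ‖W s‖ ≤ ρ s := Real.le_sqrt_of_sq_le (by linarith [sq_nonneg ε])
  have hρ_le : ρ 0 ≤ ‖W 0‖ + ε :=
    Real.sqrt_le_iff.2 ⟨by positivity, by nlinarith [mul_nonneg (norm_nonneg (W 0)) hε.le]⟩
  have hderiv (s : ℝ) (hs : 0 ≤ s) :
      HasDerivWithinAt (fun s ↦ ρ s - β s) (2 * ⟪W s, W' s⟫ / (2 * ρ s) - α s) (Set.Ici 0) s :=
    (((hW s hs).norm_sq.add_const _).sqrt (by positivity)).sub (hβ s hs)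
  have hanti : AntitoneOn (fun s ↦ ρ s - β s) (Set.Ici 0) := by
    refine antitoneOn_of_hasDerivWithinAt_nonpos (convex_Ici 0)
      (fun s hs ↦ (hderiv s hs).continuousWithinAt)
      (fun s hs ↦ (hderiv s (interior_subset hs)).mono interior_subset) fun s hs ↦ ?_
    have hs₀ : 0 ≤ s := interior_subset (s := Set.Ici (0 : ℝ)) hs
    rw [mul_div_mul_left _ _ two_ne_zero, sub_nonpos, div_le_iff₀' (hρ_pos s)]
    exact (hinner s hs₀).trans (mul_le_mul_of_nonneg_right (hle_ρ s) (hα s hs₀))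
  have h₀ : ρ t - β t ≤ ρ 0 - β 0 := hanti Set.self_mem_Ici (Set.mem_Ici.2 ht) ht
  linarith [hle_ρ t]

theorem norm_le_exp_mul_of_dissipative {m : ℝ} {Z g : ℝ → E} {a β : ℝ → ℝ}
    (hZ : ∀ t, 0 ≤ t → HasDerivWithinAt Z (-g t) (Set.Ici 0) t)
    (hβ : ∀ t, 0 ≤ t → HasDerivWithinAt β (Real.exp (m * t) * a t) (Set.Ici 0) t)
    (ha : ∀ t, 0 ≤ t → 0 ≤ a t)
    (hg : ∀ t, 0 ≤ t → m * ‖Z t‖ ^ 2 - ‖Z t‖ * a t ≤ ⟪Z t, g t⟫) {t : ℝ} (ht : 0 ≤ t) :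
    ‖Z t‖ ≤ Real.exp (-m * t) * (‖Z 0‖ + (β t - β 0)) := by
  have hexp (s : ℝ) : HasDerivWithinAt (fun s ↦ Real.exp (m * s)) (Real.exp (m * s) * m)
      (Set.Ici 0) s := by
    simpa using ((hasDerivAt_id s).const_mul m).exp.hasDerivWithinAt
  have hinner (s : ℝ) (hs : 0 ≤ s) :
      ⟪Real.exp (m * s) • Z s, Real.exp (m * s) • -g s + (Real.exp (m * s) * m) • Z s⟫
        ≤ ‖Real.exp (m * s) • Z s‖ * (Real.exp (m * s) * a s) := by
    simp only [inner_add_right, real_inner_smul_left, real_inner_smul_right, inner_neg_right,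
      real_inner_self_eq_norm_sq, norm_smul, Real.norm_eq_abs, Real.abs_exp]
    nlinarith [mul_le_mul_of_nonneg_left (hg s hs) (sq_nonneg (Real.exp (m * s)))]
  rw [neg_mul, Real.exp_neg, le_inv_mul_iff₀ (Real.exp_pos _)]
  simpa [norm_smul] using norm_le_add_of_inner_deriv_le
    (fun s hs ↦ (hexp s).smul (hZ s hs)) hβ
    (fun s hs ↦ mul_nonneg (Real.exp_pos _).le (ha s hs)) hinner ht

end Dissipative

section StronglyMonotone

variable {E : Type*} [NormedAddCommGroup E] [InnerProductSpace ℝ E] {m K : ℝ} {b : E → E}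

/-- Strong monotonicity with constant `m` of a vector field `b`, the drift being `-b`. For
`b = ∇U` it is the first-order form of the `m`-strong convexity of `U`. -/
def IsStronglyMonotone (m : ℝ) (b : E → E) : Prop :=
  ∀ x y, m * ‖x - y‖ ^ 2 ≤ ⟪x - y, b x - b y⟫

theorem IsStronglyMonotone.le_inner_sub_sub_sub (hmono : IsStronglyMonotone m b)
    (hb : ContDiff ℝ 2 b) (hK : ∀ x, ‖iteratedFDeriv ℝ 2 b x‖ ≤ K) (a p q r : E) :
    m * ‖a - p - (q - r)‖ ^ 2 - ‖a - p - (q - r)‖ * (K * ‖p - r‖ * ‖q - r‖)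
      ≤ ⟪a - p - (q - r), b a - b p - (b q - b r)⟫ := by
  set c := p + (q - r)
  set e := b c - b p - (b q - b r)
  have hsplit : b a - b p - (b q - b r) = b a - b c + e := by simp only [e]; abel
  have hac : a - p - (q - r) = a - c := sub_sub _ _ _
  have he : ‖e‖ ≤ K * ‖p - r‖ * ‖q - r‖ := norm_parallelogram_le hb hK p q r
  have hinner : -(‖a - c‖ * ‖e‖) ≤ ⟪a - c, e⟫ := neg_le_of_abs_le (abs_real_inner_le_norm _ _)
  rw [hsplit, hac, inner_add_right]
  linarith [hmono a c, mul_le_mul_of_nonneg_left he (norm_nonneg (a - c))]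

end StronglyMonotone

section AdditiveNoise

variable {E : Type*} [NormedAddCommGroup E] [NormedSpace ℝ E] {b : E → E} {n Y Z : ℝ → E}
  {x y : E}

/-- `Y` solves `dY = -b(Y) dt + dn` on `[0, ∞)` in integral form, along one realization `n` of the
noise. The value `n 0` is not required to vanish, so that `Y 0 = x + n 0`. -/
def IsAdditiveNoisePath (b : E → E) (n Y : ℝ → E) (x : E) : Prop :=
  Continuous Y ∧ ∀ t, 0 ≤ t → Y t = x - (∫ s in (0 : ℝ)..t, b (Y s)) + n t

namespace IsAdditiveNoisePath

theorem sub_noise_zero (hY : IsAdditiveNoisePath b n Y x) : Y 0 - n 0 = x := by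
  rw [hY.2 0 le_rfl, intervalIntegral.integral_same, sub_zero, add_sub_cancel_right]

theorem sub_apply_zero (hY : IsAdditiveNoisePath b n Y x) (hZ : IsAdditiveNoisePath b n Z y) :
    Y 0 - Z 0 = x - y := by
  rw [← hY.sub_noise_zero, ← hZ.sub_noise_zero, sub_sub_sub_cancel_right]

variable [CompleteSpace E]

theorem hasDerivWithinAt_sub_noise (hY : IsAdditiveNoisePath b n Y x) (hb : Continuous b) {t : ℝ}
    (ht : 0 ≤ t) : HasDerivWithinAt (fun s ↦ Y s - n s) (-b (Y t)) (Set.Ici 0) t := by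
  have hint : HasDerivAt (fun s ↦ x - ∫ r in (0 : ℝ)..s, b (Y r)) (-b (Y t)) t :=
    ((hb.comp hY.1).integral_hasStrictDerivAt 0 t).hasDerivAt.const_sub x
  exact hint.hasDerivWithinAt.congr (fun s hs ↦ sub_eq_of_eq_add (hY.2 s hs))
    (sub_eq_of_eq_add (hY.2 t ht))

theorem hasDerivWithinAt_sub (hY : IsAdditiveNoisePath b n Y x) (hZ : IsAdditiveNoisePath b n Z y)
    (hb : Continuous b) {t : ℝ} (ht : 0 ≤ t) :
    HasDerivWithinAt (fun s ↦ Y s - Z s) (-(b (Y t) - b (Z t))) (Set.Ici 0) t := by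
  simpa only [Pi.sub_def, sub_sub_sub_cancel_right, neg_sub_neg, neg_sub] using
    (hY.hasDerivWithinAt_sub_noise hb ht).sub (hZ.hasDerivWithinAt_sub_noise hb ht)

end IsAdditiveNoisePath

end AdditiveNoise

namespace IsAdditiveNoisePath

variable {E : Type*} [NormedAddCommGroup E] [InnerProductSpace ℝ E] [CompleteSpace E] {m K : ℝ}
  {b : E → E} {n Y Z : ℝ → E} {x y : E}

theorem norm_sub_le (hY : IsAdditiveNoisePath b n Y x) (hZ : IsAdditiveNoisePath b n Z y)
    (hb : Continuous b) (hmono : IsStronglyMonotone m b) {t : ℝ} (ht : 0 ≤ t) :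
    ‖Y t - Z t‖ ≤ Real.exp (-m * t) * ‖x - y‖ := by
  simpa [hY.sub_apply_zero hZ] using norm_le_exp_mul_of_dissipative (a := 0) (β := fun _ ↦ 0)
    (fun s hs ↦ hY.hasDerivWithinAt_sub hZ hb hs)
    (fun s _ ↦ (hasDerivWithinAt_const s _ 0).congr_deriv (by simp)) (fun _ _ ↦ le_rfl)
    (fun s _ ↦ by simpa using hmono (Y s) (Z s)) ht

variable {Yu Yv Yuv : ℝ → E} {u v : E}

theorem norm_sub_mul_norm_sub_le (hY : IsAdditiveNoisePath b n Y x)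
    (hYu : IsAdditiveNoisePath b n Yu (x + u)) (hYv : IsAdditiveNoisePath b n Yv (x + v))
    (hb : Continuous b) (hmono : IsStronglyMonotone m b) {t : ℝ} (ht : 0 ≤ t) :
    ‖Yu t - Y t‖ * ‖Yv t - Y t‖ ≤ ‖u‖ * ‖v‖ * Real.exp (-m * t) ^ 2 := by
  have hu : ‖Yu t - Y t‖ ≤ Real.exp (-m * t) * ‖u‖ := by
    simpa using hYu.norm_sub_le hY hb hmono ht
  have hv : ‖Yv t - Y t‖ ≤ Real.exp (-m * t) * ‖v‖ := by
    simpa using hYv.norm_sub_le hY hb hmono ht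
  calc ‖Yu t - Y t‖ * ‖Yv t - Y t‖
      ≤ Real.exp (-m * t) * ‖u‖ * (Real.exp (-m * t) * ‖v‖) := by gcongr
    _ = ‖u‖ * ‖v‖ * Real.exp (-m * t) ^ 2 := by ring

theorem norm_sub_sub_sub_le (hY : IsAdditiveNoisePath b n Y x)
    (hYu : IsAdditiveNoisePath b n Yu (x + u)) (hYv : IsAdditiveNoisePath b n Yv (x + v))
    (hYuv : IsAdditiveNoisePath b n Yuv (x + u + v)) (hm : 0 < m) (hmono : IsStronglyMonotone m b)
    (hb : ContDiff ℝ 2 b) (hK : ∀ x, ‖iteratedFDeriv ℝ 2 b x‖ ≤ K) {t : ℝ} (ht : 0 ≤ t) :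
    ‖Yuv t - Yu t - (Yv t - Y t)‖ ≤ K / m * Real.exp (-m * t) * ‖u‖ * ‖v‖ := by
  have hK₀ : 0 ≤ K := (norm_nonneg _).trans (hK 0)
  have hbc : Continuous b := hb.continuous
  set A := K * ‖u‖ * ‖v‖ with hA
  have hderiv (s : ℝ) (hs : 0 ≤ s) : HasDerivWithinAt (fun s ↦ Yuv s - Yu s - (Yv s - Y s))
      (-(b (Yuv s) - b (Yu s) - (b (Yv s) - b (Y s)))) (Set.Ici 0) s :=
    ((hYuv.hasDerivWithinAt_sub hYu hbc hs).sub
      (hYv.hasDerivWithinAt_sub hY hbc hs)).congr_deriv (by abel)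
  have hzero : Yuv 0 - Yu 0 - (Yv 0 - Y 0) = 0 := by
    rw [hYuv.sub_apply_zero hYu, hYv.sub_apply_zero hY]
    abel
  have hβ (s : ℝ) : HasDerivWithinAt (fun s ↦ -(A / m) * Real.exp (-m * s))
      (Real.exp (m * s) * (A * Real.exp (-m * s) ^ 2)) (Set.Ici 0) s := by
    have h := ((hasDerivAt_id s).const_mul (-m)).exp.const_mul (-(A / m))
    refine h.hasDerivWithinAt.congr_deriv ?_
    simp only [id, neg_mul, Real.exp_neg]
    field_simp
  have hdissip (s : ℝ) (hs : 0 ≤ s) : m * ‖Yuv s - Yu s - (Yv s - Y s)‖ ^ 2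
      - ‖Yuv s - Yu s - (Yv s - Y s)‖ * (A * Real.exp (-m * s) ^ 2)
      ≤ ⟪Yuv s - Yu s - (Yv s - Y s), b (Yuv s) - b (Yu s) - (b (Yv s) - b (Y s))⟫ := by
    have hprod : K * ‖Yu s - Y s‖ * ‖Yv s - Y s‖ ≤ A * Real.exp (-m * s) ^ 2 := by
      rw [mul_assoc, hA, mul_assoc K, mul_assoc K]
      exact mul_le_mul_of_nonneg_left (hY.norm_sub_mul_norm_sub_le hYu hYv hbc hmono hs) hK₀
    refine le_trans ?_ (hmono.le_inner_sub_sub_sub hb hK (Yuv s) (Yu s) (Yv s) (Y s))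
    gcongr
  calc ‖Yuv t - Yu t - (Yv t - Y t)‖
      ≤ Real.exp (-m * t) * (A / m * (1 - Real.exp (-m * t))) := by
        refine (norm_le_exp_mul_of_dissipative hderiv (fun s _ ↦ hβ s) (fun _ _ ↦ by positivity)
          hdissip ht).trans_eq ?_
        rw [hzero, norm_zero, mul_zero, Real.exp_zero]
        ring
    _ ≤ Real.exp (-m * t) * (A / m * 1) := by
        gcongr
        exact sub_le_self _ (Real.exp_pos _).le
    _ = K / m * Real.exp (-m * t) * ‖u‖ * ‖v‖ := by rw [hA]; ring

theorem norm_comp_sub_sub_sub_le {F : Type*} [NormedAddCommGroup F] [NormedSpace ℝ F]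
    {h : E → F} {M₁ M₂ : ℝ} (hY : IsAdditiveNoisePath b n Y x)
    (hYu : IsAdditiveNoisePath b n Yu (x + u)) (hYv : IsAdditiveNoisePath b n Yv (x + v))
    (hYuv : IsAdditiveNoisePath b n Yuv (x + u + v)) (hm : 0 < m) (hmono : IsStronglyMonotone m b)
    (hb : ContDiff ℝ 2 b) (hK : ∀ x, ‖iteratedFDeriv ℝ 2 b x‖ ≤ K) (hh : ContDiff ℝ 2 h)
    (hM₁ : ∀ x, ‖fderiv ℝ h x‖ ≤ M₁) (hM₂ : ∀ x, ‖iteratedFDeriv ℝ 2 h x‖ ≤ M₂) {t : ℝ}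
    (ht : 0 ≤ t) :
    ‖h (Yuv t) - h (Yu t) - (h (Yv t) - h (Y t))‖
      ≤ (K / m * M₁ + M₂) * Real.exp (-m * t) * ‖u‖ * ‖v‖ := by
  have hM₁₀ : 0 ≤ M₁ := (norm_nonneg _).trans (hM₁ 0)
  have hM₂₀ : 0 ≤ M₂ := (norm_nonneg _).trans (hM₂ 0)
  have hexp : Real.exp (-m * t) ^ 2 ≤ Real.exp (-m * t) :=
    pow_le_of_le_one (Real.exp_pos _).le
      (Real.exp_le_one_iff.2 (mul_nonpos_of_nonpos_of_nonneg (neg_nonpos.2 hm.le) ht)) two_ne_zero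
  calc ‖h (Yuv t) - h (Yu t) - (h (Yv t) - h (Y t))‖
      ≤ M₁ * ‖Yuv t - Yu t - (Yv t - Y t)‖ + M₂ * (‖Yu t - Y t‖ * ‖Yv t - Y t‖) := by
        rw [← mul_assoc]
        exact _root_.norm_sub_sub_sub_le hh hM₁ hM₂ _ _ _ _
    _ ≤ M₁ * (K / m * Real.exp (-m * t) * ‖u‖ * ‖v‖) + M₂ * (‖u‖ * ‖v‖ * Real.exp (-m * t) ^ 2) :=
        add_le_add
          (mul_le_mul_of_nonneg_left (hY.norm_sub_sub_sub_le hYu hYv hYuv hm hmono hb hK ht) hM₁₀)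
          (mul_le_mul_of_nonneg_left
            (hY.norm_sub_mul_norm_sub_le hYu hYv hb.continuous hmono ht) hM₂₀)
    _ ≤ M₁ * (K / m * Real.exp (-m * t) * ‖u‖ * ‖v‖) + M₂ * (‖u‖ * ‖v‖ * Real.exp (-m * t)) := by
        gcongr
    _ = (K / m * M₁ + M₂) * Real.exp (-m * t) * ‖u‖ * ‖v‖ := by ring

theorem norm_le (hY : IsAdditiveNoisePath b n Y x) (hb : Continuous b) (hm : 0 ≤ m)
    (hmono : IsStronglyMonotone m b) (hn : Continuous n) {t : ℝ} (ht : 0 ≤ t) :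
    ‖Y t‖ ≤ ‖x‖ + ‖n t‖ + ∫ s in (0 : ℝ)..t, ‖b (n s)‖ := by
  have hβ (s : ℝ) : HasDerivWithinAt (fun s ↦ ∫ r in (0 : ℝ)..s, ‖b (n r)‖) ‖b (n s)‖
      (Set.Ici 0) s :=
    ((hb.comp hn).norm.integral_hasStrictDerivAt 0 s).hasDerivAt.hasDerivWithinAt
  have hinner (s : ℝ) : ⟪Y s - n s, -b (Y s)⟫ ≤ ‖Y s - n s‖ * ‖b (n s)‖ := by
    have hmono' : 0 ≤ ⟪Y s - n s, b (Y s) - b (n s)⟫ := le_trans (by positivity) (hmono _ _)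
    have hcs : -(‖Y s - n s‖ * ‖b (n s)‖) ≤ ⟪Y s - n s, b (n s)⟫ :=
      neg_le_of_abs_le (abs_real_inner_le_norm _ _)
    rw [inner_sub_right] at hmono'
    rw [inner_neg_right]
    linarith
  have h := norm_le_add_of_inner_deriv_le (fun s hs ↦ hY.hasDerivWithinAt_sub_noise hb hs)
    (fun s _ ↦ hβ s) (fun _ _ ↦ norm_nonneg _) (fun s _ ↦ hinner s) ht
  rw [hY.sub_noise_zero, intervalIntegral.integral_same, sub_zero] at h
  linarith [norm_le_norm_add_norm_sub' (Y t) (n t)]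

end IsAdditiveNoisePath

section TransitionOperator

variable {Ω : Type*} [MeasurableSpace Ω] {E F : Type*} [NormedAddCommGroup F] [NormedSpace ℝ F]

/-- The transition operator `P_t h(x) = E[h(X_t^x)]` of a stochastic flow `X`, the family of
processes `X x` indexed by their starting points `x`. -/
def transitionOperator (P : Measure Ω) (X : E → ℝ → Ω → E) (t : ℝ) (h : E → F) (x : E) : F :=
  ∫ ω, h (X x t ω) ∂P

variable [NormedAddCommGroup E] [InnerProductSpace ℝ E] [CompleteSpace E] {P : Measure Ω}
  [IsProbabilityMeasure P] {m K M₁ M₂ : ℝ} {b : E → E} {N : ℝ → Ω → E} {X : E → ℝ → Ω → E}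
  {h : E → F} {t : ℝ}

theorem norm_transitionOperator_sub_le (hmono : IsStronglyMonotone m b) (hb : Continuous b)
    (hX : ∀ x, ∀ᵐ ω ∂P, IsAdditiveNoisePath b (fun s ↦ N s ω) (fun s ↦ X x s ω) x)
    (hh : Differentiable ℝ h) (hM₁ : ∀ x, ‖fderiv ℝ h x‖ ≤ M₁) (ht : 0 ≤ t)
    (hint : ∀ x, Integrable (fun ω ↦ h (X x t ω)) P) (x y : E) :
    ‖transitionOperator P X t h x - transitionOperator P X t h y‖
      ≤ M₁ * Real.exp (-m * t) * ‖x - y‖ := by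
  have hM₁₀ : 0 ≤ M₁ := (norm_nonneg _).trans (hM₁ 0)
  have hpath : ∀ᵐ ω ∂P, ‖h (X x t ω) - h (X y t ω)‖ ≤ M₁ * Real.exp (-m * t) * ‖x - y‖ := by
    filter_upwards [hX x, hX y] with ω hx hy
    calc ‖h (X x t ω) - h (X y t ω)‖ ≤ M₁ * ‖X x t ω - X y t ω‖ :=
          norm_sub_le_of_norm_fderiv_le hh hM₁ _ _
      _ ≤ M₁ * (Real.exp (-m * t) * ‖x - y‖) := by
          gcongr
          exact hx.norm_sub_le hy hb hmono ht
      _ = M₁ * Real.exp (-m * t) * ‖x - y‖ := (mul_assoc _ _ _).symm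
  rw [transitionOperator, transitionOperator, ← integral_sub (hint x) (hint y)]
  simpa using norm_integral_le_of_norm_le_const hpath

theorem norm_fwdDiff_fwdDiff_transitionOperator_le (hm : 0 < m) (hmono : IsStronglyMonotone m b)
    (hb : ContDiff ℝ 2 b) (hK : ∀ x, ‖iteratedFDeriv ℝ 2 b x‖ ≤ K)
    (hX : ∀ x, ∀ᵐ ω ∂P, IsAdditiveNoisePath b (fun s ↦ N s ω) (fun s ↦ X x s ω) x)
    (hh : ContDiff ℝ 2 h) (hM₁ : ∀ x, ‖fderiv ℝ h x‖ ≤ M₁)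
    (hM₂ : ∀ x, ‖iteratedFDeriv ℝ 2 h x‖ ≤ M₂) (ht : 0 ≤ t)
    (hint : ∀ x, Integrable (fun ω ↦ h (X x t ω)) P) (x u v : E) :
    ‖Δ_[u] (Δ_[v] (transitionOperator P X t h)) x‖
      ≤ (K / m * M₁ + M₂) * Real.exp (-m * t) * ‖u‖ * ‖v‖ := by
  have hpath : ∀ᵐ ω ∂P,
      ‖h (X (x + u + v) t ω) - h (X (x + u) t ω) - (h (X (x + v) t ω) - h (X x t ω))‖
        ≤ (K / m * M₁ + M₂) * Real.exp (-m * t) * ‖u‖ * ‖v‖ := by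
    filter_upwards [hX x, hX (x + u), hX (x + v), hX (x + u + v)] with ω h₀ hu hv huv
    exact h₀.norm_comp_sub_sub_sub_le hu hv huv hm hmono hb hK hh hM₁ hM₂ ht
  have hΔ : Δ_[u] (Δ_[v] (transitionOperator P X t h)) x =
      ∫ ω, (h (X (x + u + v) t ω) - h (X (x + u) t ω) - (h (X (x + v) t ω) - h (X x t ω))) ∂P := by
    rw [integral_sub, integral_sub, integral_sub] <;>
      first | rfl | exact hint _ | exact (hint _).sub (hint _)
  rw [hΔ]
  simpa using norm_integral_le_of_norm_le_const hpath

end TransitionOperator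

section Gradient

variable {E : Type*} [NormedAddCommGroup E] [InnerProductSpace ℝ E] [CompleteSpace E]

theorem norm_gradient (f : E → ℝ) (x : E) : ‖gradient f x‖ = ‖fderiv ℝ f x‖ :=
  (InnerProductSpace.toDual ℝ E).symm.norm_map _

theorem contDiff_gradient {f : E → ℝ} {n : ℕ} (hf : ContDiff ℝ (n + 1) f) :
    ContDiff ℝ n (gradient f) :=
  (InnerProductSpace.toDual ℝ E).symm.contDiff.comp (hf.fderiv_right le_rfl)

theorem norm_iteratedFDeriv_gradient (f : E → ℝ) (n : ℕ) (x : E) :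
    ‖iteratedFDeriv ℝ n (gradient f) x‖ = ‖iteratedFDeriv ℝ (n + 1) f x‖ := by
  rw [← norm_iteratedFDeriv_fderiv]
  exact (InnerProductSpace.toDual ℝ E).symm.norm_iteratedFDeriv_comp_left (fderiv ℝ f) x n

end Gradient

namespace StrongAssumption

variable {d : ℕ} {U : Euc d → ℝ} {m L : ℝ}

theorem isStronglyMonotone_gradient (hU : StrongAssumption U m L) :
    IsStronglyMonotone m (gradient U) := by
  obtain ⟨-, -, -, hconvex, -⟩ := hU
  intro x y
  have hxy := (hconvex x y).1
  have hyx := (hconvex y x).1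
  rw [← neg_sub x y, inner_neg_right] at hxy
  rw [norm_sub_rev y x] at hyx
  rw [inner_sub_right, real_inner_comm, real_inner_comm (gradient U y)]
  linarith

theorem norm_gradient_le (hU : StrongAssumption U m L) (x : Euc d) :
    ‖gradient U x‖ ≤ L * ‖x‖ := by
  obtain ⟨-, hm, hmL, hconvex, hgrad⟩ := hU
  have hL : 0 < L := hm.trans_le hmL
  -- One gradient step of length `1 / L` decreases `U` by `‖∇U x‖² / (2 L)`, and `0` minimizes `U`.
  have hstep := (hconvex x (x - L⁻¹ • gradient U x)).2
  have hmin := (hconvex 0 (x - L⁻¹ • gradient U x)).1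
  have hquad := (hconvex 0 x).2
  simp only [hgrad, inner_zero_left, zero_sub, norm_neg, sub_zero, sub_sub_cancel, norm_smul,
    sub_sub_cancel_left, inner_neg_right, real_inner_smul_right, real_inner_self_eq_norm_sq,
    Real.norm_eq_abs, abs_of_pos (inv_pos.2 hL)] at hstep hmin hquad
  have hsq : ‖gradient U x‖ ^ 2 ≤ (L * ‖x‖) ^ 2 := by
    have hbound : L⁻¹ * ‖gradient U x‖ ^ 2 - L / 2 * (L⁻¹ * ‖gradient U x‖) ^ 2
        ≤ L / 2 * ‖x‖ ^ 2 := by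
      linarith [show 0 ≤ m / 2 * ‖x - L⁻¹ • gradient U x‖ ^ 2 by positivity]
    field_simp at hbound
    linarith
  exact le_of_sq_le_sq hsq (by positivity)

end StrongAssumption

section Integrability

variable {Ω : Type*} [MeasurableSpace Ω] {P : Measure Ω} {G : Type*} [NormedAddCommGroup G]
  [NormedSpace ℝ G]

theorem integrable_intervalIntegral_of_ae_continuous [SFinite P] {V : ℝ → Ω → G} {C t : ℝ}
    (hV : ∀ s, StronglyMeasurable (V s)) (hcont : ∀ᵐ ω ∂P, Continuous fun s ↦ V s ω)
    (ht : 0 ≤ t) (hint : ∀ s ∈ Set.Ioc 0 t, Integrable (V s) P)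
    (hC : ∀ s ∈ Set.Ioc 0 t, ∫ ω, ‖V s ω‖ ∂P ≤ C) :
    Integrable (fun ω ↦ ∫ s in (0 : ℝ)..t, V s ω) P := by
  obtain ⟨A, hA, hAmeas, hAcont⟩ := hcont.exists_measurable_mem
  set W : ℝ → Ω → G := fun s ↦ A.indicator (V s)
  have hWcont (ω : Ω) : Continuous fun s ↦ W s ω := by
    by_cases hω : ω ∈ A
    · simpa only [W, Set.indicator_of_mem hω] using hAcont ω hω
    · simpa only [W, Set.indicator_of_notMem hω] using continuous_const
  have hW (s : ℝ) : W s =ᵐ[P] V s := by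
    filter_upwards [hA] with ω hω using Set.indicator_of_mem hω _
  have hmeas : StronglyMeasurable (Function.uncurry W) :=
    stronglyMeasurable_uncurry_of_continuous_of_stronglyMeasurable hWcont
      fun s ↦ (hV s).indicator hAmeas
  have hWint : Integrable (Function.uncurry W) ((volume.restrict (Set.Ioc 0 t)).prod P) := by
    refine (integrable_prod_iff hmeas.aestronglyMeasurable).2 ⟨?_, ?_⟩
    · exact (ae_restrict_iff' measurableSet_Ioc).2
        (.of_forall fun s hs ↦ (hint s hs).congr (hW s).symm)
    · refine .of_bound hmeas.norm.integral_prod_right.aestronglyMeasurable C ?_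
      refine (ae_restrict_iff' measurableSet_Ioc).2 (.of_forall fun s hs ↦ ?_)
      rw [Real.norm_of_nonneg (integral_nonneg fun _ ↦ norm_nonneg _)]
      exact (integral_congr_ae ((hW s).fun_comp norm)).trans_le (hC s hs)
  refine hWint.integral_prod_right.congr ?_
  filter_upwards [hA] with ω hω
  simp only [intervalIntegral.integral_of_le ht, Function.uncurry, W, Set.indicator_of_mem hω]

end Integrability

namespace IsBrownianMotion

variable {Ω : Type} [MeasurableSpace Ω] {P : Measure Ω} {d : ℕ} {B : ℝ → Ω → Euc d} {s : ℝ}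

theorem map_eq (hB : IsBrownianMotion P B) (hs : 0 ≤ s) :
    P.map (B s) = (ProbabilityTheory.stdGaussian (Euc d)).map (√s • ·) := by
  obtain ⟨-, hpath, hincr, -⟩ := hB
  have hzero : (fun ω ↦ B s ω - B 0 ω) =ᵐ[P] B s := by
    filter_upwards [hpath] with ω hω
    rw [hω.1, sub_zero]
  rw [← map_pi_eq_stdGaussian, ← Measure.map_congr hzero, hincr 0 s le_rfl hs, sub_zero]
  rfl

theorem integrable (hB : IsBrownianMotion P B) (hs : 0 ≤ s) : Integrable (B s) P := by
  have h : Integrable id (P.map (B s)) := by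
    rw [hB.map_eq hs, integrable_map_measure (by fun_prop) (by fun_prop)]
    exact IsGaussian.integrable_id.smul (√s)
  exact h.comp_measurable (hB.1 s)

theorem integral_norm (hB : IsBrownianMotion P B) (hs : 0 ≤ s) :
    ∫ ω, ‖B s ω‖ ∂P = √s * ∫ z, ‖z‖ ∂ProbabilityTheory.stdGaussian (Euc d) := by
  rw [← integral_map (φ := B s) (f := norm) (hB.1 s).aemeasurable (by fun_prop), hB.map_eq hs,
    integral_map (by fun_prop) (by fun_prop), ← integral_const_mul]
  simp only [norm_smul, Real.norm_of_nonneg (Real.sqrt_nonneg s)]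

theorem integrable_intervalIntegral_comp [SFinite P] {G : Type*} [NormedAddCommGroup G]
    [NormedSpace ℝ G] {g : Euc d → G} {A t : ℝ} (hB : IsBrownianMotion P B) (hg : Continuous g)
    (hA : 0 ≤ A) (hgA : ∀ x, ‖g x‖ ≤ A * ‖x‖) (ht : 0 ≤ t) :
    Integrable (fun ω ↦ ∫ s in (0 : ℝ)..t, g (B s ω)) P := by
  have hmeas (s : ℝ) : StronglyMeasurable fun ω ↦ g (B s ω) :=
    hg.comp_stronglyMeasurable (hB.1 s).stronglyMeasurable
  have hcont : ∀ᵐ ω ∂P, Continuous fun s ↦ g (B s ω) := by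
    filter_upwards [hB.2.1] with ω hω using hg.comp hω.2
  have hint {s : ℝ} (hs : 0 ≤ s) : Integrable (fun ω ↦ g (B s ω)) P :=
    ((hB.integrable hs).norm.const_mul A).mono' (hmeas s).aestronglyMeasurable
      (.of_forall fun ω ↦ hgA (B s ω))
  refine integrable_intervalIntegral_of_ae_continuous hmeas hcont ht (fun s hs ↦ hint hs.1.le)
    (C := A * (√t * ∫ z, ‖z‖ ∂ProbabilityTheory.stdGaussian (Euc d))) fun s hs ↦ ?_
  calc ∫ ω, ‖g (B s ω)‖ ∂P ≤ ∫ ω, A * ‖B s ω‖ ∂P :=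
        integral_mono (hint hs.1.le).norm ((hB.integrable hs.1.le).norm.const_mul A)
          fun ω ↦ hgA (B s ω)
    _ = A * (√s * ∫ z, ‖z‖ ∂ProbabilityTheory.stdGaussian (Euc d)) := by
        rw [integral_const_mul, hB.integral_norm hs.1.le]
    _ ≤ A * (√t * ∫ z, ‖z‖ ∂ProbabilityTheory.stdGaussian (Euc d)) := by
        gcongr
        exact hs.2

end IsBrownianMotion

theorem SolvesLangevin.integrable {Ω : Type} [MeasurableSpace Ω] {P : Measure Ω}
    [IsFiniteMeasure P] {d : ℕ} {B X : ℝ → Ω → Euc d} {U : Euc d → ℝ} {m L : ℝ} {x : Euc d} {t : ℝ}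
    (hX : SolvesLangevin U P B X x) (hB : IsBrownianMotion P B) (hU : StrongAssumption U m L)
    (ht : 0 ≤ t) : Integrable (X t) P := by
  have hm : 0 < m := hU.2.1
  have hL : 0 ≤ L := hm.le.trans hU.2.2.1
  have hgrad : Continuous (gradient U) := (contDiff_gradient (n := 0) hU.1).continuous
  have hdrift : Integrable (fun ω ↦ ∫ s in (0 : ℝ)..t, ‖gradient U (√2 • B s ω)‖) P := by
    refine hB.integrable_intervalIntegral_comp (g := fun z ↦ ‖gradient U (√2 • z)‖) (A := L * √2)
      (by fun_prop) (by positivity) (fun z ↦ ?_) ht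
    simpa [norm_smul, mul_assoc, abs_of_nonneg] using hU.norm_gradient_le (√2 • z)
  refine (((integrable_const ‖x‖).add ((hB.integrable ht).smul √2).norm).add hdrift).mono'
    (hX.1 t).aestronglyMeasurable ?_
  filter_upwards [hB.2.1, hX.2] with ω hBω hXω
  exact IsAdditiveNoisePath.norm_le (n := fun s ↦ √2 • B s ω) hXω hgrad hm.le
    hU.isStronglyMonotone_gradient (hBω.2.const_smul √2) ht

theorem integrable_comp_of_norm_fderiv_le {α E F : Type*} [MeasurableSpace α] {P : Measure α}
    [IsFiniteMeasure P] [NormedAddCommGroup E] [NormedSpace ℝ E] [NormedAddCommGroup F]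
    [NormedSpace ℝ F] {h : E → F} {M : ℝ} {Y : α → E} (hh : Differentiable ℝ h)
    (hM : ∀ x, ‖fderiv ℝ h x‖ ≤ M) (hY : Integrable Y P) : Integrable (fun ω ↦ h (Y ω)) P := by
  refine ((hY.norm.const_mul M).add (integrable_const ‖h 0‖)).mono'
    (hh.continuous.comp_aestronglyMeasurable hY.1) (.of_forall fun ω ↦ ?_)
  have hlip := norm_sub_le_of_norm_fderiv_le hh hM (Y ω) 0
  rw [sub_zero] at hlip
  calc ‖h (Y ω)‖ ≤ ‖h 0‖ + ‖h (Y ω) - h 0‖ := norm_le_norm_add_norm_sub' _ _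
    _ ≤ ‖h 0‖ + M * ‖Y ω‖ := by gcongr
    _ = M * ‖Y ω‖ + ‖h 0‖ := add_comm _ _

theorem stmt14_general {Ω : Type*} [MeasurableSpace Ω] {P : Measure Ω} [IsProbabilityMeasure P]
    {E F : Type*} [NormedAddCommGroup E] [InnerProductSpace ℝ E] [FiniteDimensional ℝ E]
    [NormedAddCommGroup F] [NormedSpace ℝ F] [FiniteDimensional ℝ F] {m K M₁ M₂ : ℝ} (hm : 0 < m)
    {b : E → E} (hmono : IsStronglyMonotone m b) (hb : ContDiff ℝ 2 b)
    (hK : ∀ x, ‖iteratedFDeriv ℝ 2 b x‖ ≤ K) {N : ℝ → Ω → E} {X : E → ℝ → Ω → E}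
    (hX : ∀ x, ∀ᵐ ω ∂P, IsAdditiveNoisePath b (fun s ↦ N s ω) (fun s ↦ X x s ω) x) {h : E → F}
    (hh : ContDiff ℝ 2 h) (hM₁ : ∀ x, ‖fderiv ℝ h x‖ ≤ M₁)
    (hM₂ : ∀ x, ‖iteratedFDeriv ℝ 2 h x‖ ≤ M₂) {t : ℝ} (ht : 0 ≤ t)
    (hint : ∀ x, Integrable (fun ω ↦ h (X x t ω)) P) :
    Differentiable ℝ (transitionOperator P X t h) ∧
      (∀ x, ‖fderiv ℝ (transitionOperator P X t h) x‖ ≤ M₁ * Real.exp (-m * t)) ∧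
      ∀ x, ‖iteratedFDeriv ℝ 2 (transitionOperator P X t h) x‖
        ≤ (K / m + 1) * (M₁ + M₂) * Real.exp (-m * t) := by
  have := FiniteDimensional.complete ℝ E
  have hK₀ : 0 ≤ K := (norm_nonneg _).trans (hK 0)
  have hM₁₀ : 0 ≤ M₁ := (norm_nonneg _).trans (hM₁ 0)
  have hM₂₀ : 0 ≤ M₂ := (norm_nonneg _).trans (hM₂ 0)
  let A : ℝ≥0 := ⟨M₁ * Real.exp (-m * t), by positivity⟩
  have hlip : LipschitzWith A (transitionOperator P X t h) :=
    .of_dist_le_mul fun x y ↦ by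
      rw [dist_eq_norm, dist_eq_norm]
      exact norm_transitionOperator_sub_le hmono hb.continuous hX (hh.differentiable two_ne_zero)
        hM₁ ht hint x y
  have hΔ := norm_fwdDiff_fwdDiff_transitionOperator_le hm hmono hb hK hX hh hM₁ hM₂ ht hint
  have hC : 0 ≤ (K / m * M₁ + M₂) * Real.exp (-m * t) := by positivity
  refine ⟨differentiable_of_norm_fwdDiff_fwdDiff_le hlip hC hΔ,
    fun x ↦ norm_fderiv_le_of_lipschitz ℝ hlip,
    fun x ↦ (norm_iteratedFDeriv_two_le_of_norm_fwdDiff_fwdDiff_le hlip hC hΔ x).trans ?_⟩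
  gcongr
  linarith [show 0 ≤ K / m * M₂ by positivity]

theorem langevin_transitionOperator_bounds {Ω : Type} [MeasurableSpace Ω] {P : Measure Ω}
    [IsProbabilityMeasure P] {d : ℕ} {U : Euc d → ℝ} {m L Lt M₁ M₂ t : ℝ} {B : ℝ → Ω → Euc d}
    {X : Euc d → ℝ → Ω → Euc d} {h : Euc d → ℝ} (hU : StrongAssumption U m L)
    (hU₃ : ThirdDerivBounded U Lt) (hB : IsBrownianMotion P B)
    (hX : ∀ x, SolvesLangevin U P B (X x) x) (hh : ContDiff ℝ 2 h)
    (hM₁ : ∀ x, ‖gradient h x‖ ≤ M₁) (hM₂ : ∀ x, ‖iteratedFDeriv ℝ 2 h x‖ ≤ M₂) (ht : 0 ≤ t) :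
    Differentiable ℝ (transitionOperator P X t h) ∧
      (∀ x, ‖gradient (transitionOperator P X t h) x‖ ≤ M₁ * Real.exp (-m * t)) ∧
      ∀ x, ‖iteratedFDeriv ℝ 2 (transitionOperator P X t h) x‖
        ≤ (Lt / m + 1) * (M₁ + M₂) * Real.exp (-m * t) := by
  simp only [norm_gradient] at hM₁ ⊢
  exact stmt14_general (N := fun s ω ↦ √2 • B s ω) hU.2.1 hU.isStronglyMonotone_gradient
    (contDiff_gradient hU₃.1) (fun x ↦ (norm_iteratedFDeriv_gradient U 2 x).trans_le (hU₃.2 x))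
    (fun x ↦ (hX x).2) hh hM₁ hM₂ ht fun x ↦
      integrable_comp_of_norm_fderiv_le (hh.differentiable two_ne_zero) hM₁
        ((hX x).integrable hB hU ht)

/-- Under Assumptions 1 and 3, the Langevin semigroup
`P_t h(x) = E[h(X_t^x)]` satisfies `‖∇P_t h‖ ≤ ‖∇h‖ e^{−mt}` and
`‖∇²P_t h‖ ≤ C (‖∇h‖ + ‖∇²h‖) e^{−mt/2}` for every `h ∈ C²` with bounded first and second
derivatives (bounds `M1`, `M2`), with `C` independent of `t` and `h`. -/
theorem stmt14 (d : ℕ) (m L Lt : ℝ) (U : Euc d → ℝ)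
    (hU : StrongAssumption U m L) (hU3 : ThirdDerivBounded U Lt)
    (Ω : Type) [MeasurableSpace Ω] (P : Measure Ω) [IsProbabilityMeasure P]
    (B : ℝ → Ω → Euc d) (X : Euc d → ℝ → Ω → Euc d)
    (hB : IsBrownianMotion P B) (hX : ∀ y : Euc d, SolvesLangevin U P B (X y) y) :
    (∀ (h : Euc d → ℝ) (M1 M2 : ℝ), ContDiff ℝ 2 h →
      (∀ y, ‖gradient h y‖ ≤ M1) → (∀ y, ‖iteratedFDeriv ℝ 2 h y‖ ≤ M2) →
      ∀ t : ℝ, 0 ≤ t → ∀ y : Euc d,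
        ‖gradient (fun z => ∫ ω, h (X z t ω) ∂P) y‖ ≤ M1 * Real.exp (-m * t)) ∧
    ∃ C > (0 : ℝ), ∀ (h : Euc d → ℝ) (M1 M2 : ℝ), ContDiff ℝ 2 h →
      (∀ y, ‖gradient h y‖ ≤ M1) → (∀ y, ‖iteratedFDeriv ℝ 2 h y‖ ≤ M2) →
      ∀ t : ℝ, 0 ≤ t → ∀ y : Euc d,
        ‖iteratedFDeriv ℝ 2 (fun z => ∫ ω, h (X z t ω) ∂P) y‖ ≤
          C * (M1 + M2) * Real.exp (-m * t / 2) := by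
  have hm : 0 < m := hU.2.1
  have hLt : 0 ≤ Lt := (norm_nonneg _).trans (hU3.2 0)
  refine ⟨fun h M1 M2 hh hM1 hM2 t ht ↦
    (langevin_transitionOperator_bounds hU hU3 hB hX hh hM1 hM2 ht).2.1, Lt / m + 1, by positivity,
    fun h M1 M2 hh hM1 hM2 t ht y ↦
      ((langevin_transitionOperator_bounds hU hU3 hB hX hh hM1 hM2 ht).2.2 y).trans ?_⟩
  have hM : 0 ≤ M1 + M2 :=
    add_nonneg ((norm_nonneg _).trans (hM1 0)) ((norm_nonneg _).trans (hM2 0))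
  gcongr
  linarith [mul_nonneg hm.le ht]

end
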